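/- (Sufficiency in Theorem 5.2.) Let n ≥ 1 be an integer and let ã : ℝ³₊̄ → ℝ³ be of class Cⁿ up to the boundary, divergence free, and satisfy the slip boundary conditions ã₃ = 0 and ∂₃ã_j = ∂_jã₃ on Γ for j = 1,2. Assume the compatibility conditions: for every odd integer k with 3 ≤ k ≤ n, ∂₃^k ã₁(x₁,x₂,0) = ∂₃^k ã₂(x₁,x₂,0) = 0 for all (x₁,x₂) ∈ ℝ². Then the mirror extension a = 𝒯̃ã satisfies 𝒯a = a, a restricted to ℝ³₊ equals ã, and for every multi-index α with |α| ≤ n and every component j ∈ {1,2,3}, the traces on Γ of ∂^α a_j from above and from below exist and coincide. -/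

import Mathlib

/-!
On the two open half-spaces `∂^α` of the mirror extension is computed from the smooth field `a`:
above, it is `∂^α a_j`; below, by the chain rule for the reflection, it is `± (∂^α a_j) ∘ refl3`,
with sign `reflSign j * (-1) ^ α₃`. Both traces therefore exist, and they agree unless this sign is
`-1`, in which case `∂^α a_j` has to vanish on `Γ`. Since a function vanishing on `Γ` has vanishing
tangential derivatives there (`pdMulti_eq_zero_of_normal`), only `∂₃^m a_j` matters:

* for `j = 1, 2` and `m` odd, it vanishes by the compatibility conditions if `m ≥ 3`; if `m = 1`
  it equals `∂_j a₃`, a tangential derivative of `a₃ = 0` (`normal_odd_eq_zero`);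
* for `j = 3` and `m = 0` this is `a₃ = 0`; for `m ≥ 2` even, applying `∂₃^{m-1}` to
  `∇·a = 0` gives `∂₃^m a₃ = -∂₁∂₃^{m-1} a₁ - ∂₂∂₃^{m-1} a₂`, which vanishes by the previous case
  (`normal_even_eq_zero`).
-/


noncomputable section

open Filter Set

/-- The reflection `x ↦ (x₁, x₂, −x₃)` of a point of `ℝ³`. -/
def refl3 (x : Fin 3 → ℝ) : Fin 3 → ℝ := ![x 0, x 1, -(x 2)]

/-- The operator `𝒯` acting on scalar fields: `(𝒯p)(x) = p(x̄)`. -/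
def Tscal (p : (Fin 3 → ℝ) → ℝ) : (Fin 3 → ℝ) → ℝ := fun x => p (refl3 x)

/-- The operator `𝒯` acting on vector fields:
`(𝒯v)(x) = (v₁(x̄), v₂(x̄), −v₃(x̄))`. -/
def Tvec (v : (Fin 3 → ℝ) → (Fin 3 → ℝ)) : (Fin 3 → ℝ) → (Fin 3 → ℝ) :=
  fun x => ![v (refl3 x) 0, v (refl3 x) 1, -(v (refl3 x) 2)]

/-- Partial derivative in the `i`-th coordinate direction. -/
def pd (i : Fin 3) (f : (Fin 3 → ℝ) → ℝ) : (Fin 3 → ℝ) → ℝ :=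
  fun x => fderiv ℝ f x (Pi.single i 1)

/-- Divergence `∇·v = ∂₁v₁ + ∂₂v₂ + ∂₃v₃`. -/
def div3 (v : (Fin 3 → ℝ) → (Fin 3 → ℝ)) : (Fin 3 → ℝ) → ℝ :=
  fun x => pd 0 (fun y => v y 0) x + pd 1 (fun y => v y 1) x + pd 2 (fun y => v y 2) x

/-- Curl `∇×v = (∂₂v₃−∂₃v₂, ∂₃v₁−∂₁v₃, ∂₁v₂−∂₂v₁)`. -/
def curl3 (v : (Fin 3 → ℝ) → (Fin 3 → ℝ)) : (Fin 3 → ℝ) → (Fin 3 → ℝ) :=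
  fun x => ![pd 1 (fun y => v y 2) x - pd 2 (fun y => v y 1) x,
             pd 2 (fun y => v y 0) x - pd 0 (fun y => v y 2) x,
             pd 0 (fun y => v y 1) x - pd 1 (fun y => v y 0) x]

/-- Scalar Laplacian `Δf = ∂₁²f + ∂₂²f + ∂₃²f`. -/
def lap3 (f : (Fin 3 → ℝ) → ℝ) : (Fin 3 → ℝ) → ℝ :=
  fun x => pd 0 (pd 0 f) x + pd 1 (pd 1 f) x + pd 2 (pd 2 f) x

/-- `j`-th component of the convective term `(v·∇)v`. -/
def conv3 (v : (Fin 3 → ℝ) → (Fin 3 → ℝ)) (j : Fin 3) : (Fin 3 → ℝ) → ℝ :=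
  fun x => ∑ i : Fin 3, v x i * pd i (fun y => v y j) x

/-- Iterated normal derivative `∂₃^k`. -/
def pd3pow (k : ℕ) (f : (Fin 3 → ℝ) → ℝ) : (Fin 3 → ℝ) → ℝ := (pd 2)^[k] f

/-- Multi-index partial derivative `∂^α = ∂₁^{α₀} ∂₂^{α₁} ∂₃^{α₂}`. -/
def pdMulti (α : Fin 3 → ℕ) (f : (Fin 3 → ℝ) → ℝ) : (Fin 3 → ℝ) → ℝ :=
  (pd 0)^[α 0] ((pd 1)^[α 1] ((pd 2)^[α 2] f))

/-- Mirror extension `𝒯̃ã` of a field on the (closed) upper half-space: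
it equals `ã` for `x₃ ≥ 0` and `𝒯ã` for `x₃ < 0`. -/
def mirrorExt (a : (Fin 3 → ℝ) → (Fin 3 → ℝ)) : (Fin 3 → ℝ) → (Fin 3 → ℝ) :=
  fun x => if 0 ≤ x 2 then a x else Tvec a x

/-- Symmetric gradient `(𝒟u)_{ij} = (∂ᵢu_j + ∂_ju_i)/2`. -/
def Dsym (u : (Fin 3 → ℝ) → (Fin 3 → ℝ)) (x : Fin 3 → ℝ) : Matrix (Fin 3) (Fin 3) ℝ :=
  fun i j => (pd i (fun y => u y j) x + pd j (fun y => u y i) x) / 2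

/-- Frobenius norm of a `3×3` matrix. -/
def frob (D : Matrix (Fin 3) (Fin 3) ℝ) : ℝ :=
  Real.sqrt (∑ i : Fin 3, ∑ j : Fin 3, (D i j) ^ 2)

/-! ### Calculus of the partial derivatives -/

lemma contDiff_pd {k : ℕ} {f : (Fin 3 → ℝ) → ℝ} (i : Fin 3) (hf : ContDiff ℝ ((k + 1 : ℕ)) f) :
    ContDiff ℝ k (pd i f) := by
  have h : ContDiff ℝ k (fderiv ℝ f) := hf.fderiv_right (by norm_cast)
  exact h.clm_apply contDiff_const

lemma contDiff_pd_iterate {k : ℕ} (i : Fin 3) (m : ℕ) {f : (Fin 3 → ℝ) → ℝ}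
    (hf : ContDiff ℝ ((k + m : ℕ)) f) : ContDiff ℝ k ((pd i)^[m] f) := by
  induction m generalizing f with
  | zero => simpa using hf
  | succ m ih =>
    rw [Function.iterate_succ_apply]
    exact ih (contDiff_pd i hf)

lemma continuous_pdMulti {n : ℕ} {f : (Fin 3 → ℝ) → ℝ} (hf : ContDiff ℝ n f) (α : Fin 3 → ℕ)
    (hα : α 0 + α 1 + α 2 ≤ n) : Continuous (pdMulti α f) := by
  have h : ContDiff ℝ ((0 + α 0 + α 1 + α 2 : ℕ)) f := hf.of_le (by norm_cast; omega)
  have := contDiff_pd_iterate 0 _ (contDiff_pd_iterate 1 _ (contDiff_pd_iterate 2 _ h))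
  exact this.continuous

lemma pd_eqOn {U : Set (Fin 3 → ℝ)} (hU : IsOpen U) {f g : (Fin 3 → ℝ) → ℝ} (h : EqOn f g U)
    (i : Fin 3) : EqOn (pd i f) (pd i g) U := fun x hx => by
  have : f =ᶠ[nhds x] g := h.eventuallyEq_of_mem (hU.mem_nhds hx)
  simp only [pd, this.fderiv_eq]

lemma pd_iterate_eqOn {U : Set (Fin 3 → ℝ)} (hU : IsOpen U) {f g : (Fin 3 → ℝ) → ℝ}
    (h : EqOn f g U) (i : Fin 3) (m : ℕ) : EqOn ((pd i)^[m] f) ((pd i)^[m] g) U := by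
  induction m generalizing f g with
  | zero => exact h
  | succ m ih => exact ih (pd_eqOn hU h i)

lemma pdMulti_eqOn {U : Set (Fin 3 → ℝ)} (hU : IsOpen U) {f g : (Fin 3 → ℝ) → ℝ}
    (h : EqOn f g U) (α : Fin 3 → ℕ) : EqOn (pdMulti α f) (pdMulti α g) U :=
  pd_iterate_eqOn hU (pd_iterate_eqOn hU (pd_iterate_eqOn hU h _ _) _ _) _ _

lemma pd_add {f g : (Fin 3 → ℝ) → ℝ} (hf : Differentiable ℝ f) (hg : Differentiable ℝ g)
    (i : Fin 3) : pd i (fun x => f x + g x) = fun x => pd i f x + pd i g x := by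
  funext x
  simp only [pd]
  rw [fderiv_fun_add (hf x) (hg x)]
  rfl

lemma pd_iterate_add (i : Fin 3) (m : ℕ) {f g : (Fin 3 → ℝ) → ℝ} (hf : ContDiff ℝ m f)
    (hg : ContDiff ℝ m g) :
    (pd i)^[m] (fun x => f x + g x) = fun x => (pd i)^[m] f x + (pd i)^[m] g x := by
  induction m generalizing f g with
  | zero => rfl
  | succ m ih =>
    simp only [Function.iterate_succ_apply]
    rw [pd_add (hf.differentiable (by norm_cast)) (hg.differentiable (by norm_cast)),
      ih (contDiff_pd i hf) (contDiff_pd i hg)]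

lemma pd_comm {f : (Fin 3 → ℝ) → ℝ} (hf : ContDiff ℝ 2 f) (i j : Fin 3) :
    pd i (pd j f) = pd j (pd i f) := by
  have hd : Differentiable ℝ (fderiv ℝ f) :=
    (hf.fderiv_right (m := 1) (by norm_num)).differentiable (by norm_num)
  have key : ∀ (k l : Fin 3) (x : Fin 3 → ℝ), pd k (pd l f) x =
      fderiv ℝ (fderiv ℝ f) x (Pi.single k 1) (Pi.single l 1) := by
    intro k l x
    change fderiv ℝ (fun y => fderiv ℝ f y (Pi.single l 1)) x (Pi.single k 1) = _
    rw [fderiv_clm_apply (hd x) (differentiableAt_const _)]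
    simp
  funext x
  rw [key, key]
  exact (hf.contDiffAt.isSymmSndFDerivAt (by simp)) _ _

lemma pd_iterate_comm (i j : Fin 3) (m : ℕ) {f : (Fin 3 → ℝ) → ℝ}
    (hf : ContDiff ℝ ((m + 1 : ℕ)) f) :
    (pd i)^[m] (pd j f) = pd j ((pd i)^[m] f) := by
  induction m generalizing f with
  | zero => rfl
  | succ m ih =>
    simp only [Function.iterate_succ_apply]
    rw [pd_comm (hf.of_le (by norm_cast; omega)), ih (contDiff_pd i hf)]

/-! ### Behaviour under the reflection -/

/-- The sign `-1` in the normal direction and `+1` in the tangential ones. It is both the factor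
produced by `pd i` acting through the reflection and the factor of the `i`-th component in `𝒯`. -/
def reflSign (i : Fin 3) : ℝ := if i = 2 then -1 else 1

lemma refl3_refl3 (x : Fin 3 → ℝ) : refl3 (refl3 x) = x := by
  ext i; fin_cases i <;> simp [refl3]

/-- The reflection as a continuous linear equivalence. -/
def reflEquiv : (Fin 3 → ℝ) ≃L[ℝ] (Fin 3 → ℝ) :=
  LinearEquiv.toContinuousLinearEquiv
    { toFun := refl3
      invFun := refl3
      map_add' := fun x y => by ext i; fin_cases i <;> simp [refl3]; ring
      map_smul' := fun c x => by ext i; fin_cases i <;> simp [refl3]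
      left_inv := refl3_refl3
      right_inv := refl3_refl3 }

lemma refl3_single (i : Fin 3) :
    refl3 (Pi.single i 1) = reflSign i • (Pi.single i 1 : Fin 3 → ℝ) := by
  ext j; fin_cases i <;> fin_cases j <;> simp [refl3, reflSign]

/-- No differentiability is needed, the reflection being invertible. -/
lemma pd_mul_refl (c : ℝ) (f : (Fin 3 → ℝ) → ℝ) (i : Fin 3) :
    pd i (fun x => c * f (refl3 x)) = fun x => (c * reflSign i) * pd i f (refl3 x) := by
  funext x
  have h1 : (fun x => c * f (refl3 x)) = c • (f ∘ reflEquiv) := rfl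
  simp only [pd]
  rw [h1, fderiv_const_smul_field, Pi.smul_apply, reflEquiv.comp_right_fderiv]
  change c * fderiv ℝ f (refl3 x) (refl3 (Pi.single i 1)) = _
  rw [refl3_single, map_smul, smul_eq_mul, mul_assoc]

lemma pd_iterate_mul_refl (c : ℝ) (f : (Fin 3 → ℝ) → ℝ) (i : Fin 3) (m : ℕ) :
    (pd i)^[m] (fun x => c * f (refl3 x)) =
      fun x => (c * reflSign i ^ m) * (pd i)^[m] f (refl3 x) := by
  induction m generalizing f c with
  | zero => simp
  | succ m ih =>
    simp only [Function.iterate_succ_apply]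
    rw [pd_mul_refl, ih]
    funext x
    ring

lemma pdMulti_mul_refl (c : ℝ) (f : (Fin 3 → ℝ) → ℝ) (α : Fin 3 → ℕ) :
    pdMulti α (fun x => c * f (refl3 x)) =
      fun x => (c * (-1) ^ α 2) * pdMulti α f (refl3 x) := by
  unfold pdMulti
  rw [pd_iterate_mul_refl, pd_iterate_mul_refl, pd_iterate_mul_refl]
  simp [reflSign]

lemma Tvec_apply (v : (Fin 3 → ℝ) → (Fin 3 → ℝ)) (x : Fin 3 → ℝ) (j : Fin 3) :
    Tvec v x j = reflSign j * v (refl3 x) j := by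
  fin_cases j <;> simp [Tvec, reflSign]

/-! ### Vanishing on the boundary plane -/

/-- A function vanishing on `Γ` has vanishing tangential derivatives there. -/
lemma pd_tangential_eq_zero {f : (Fin 3 → ℝ) → ℝ} (hf : Differentiable ℝ f)
    (h : ∀ x : Fin 3 → ℝ, x 2 = 0 → f x = 0) {i : Fin 3} (hi : i ≠ 2) :
    ∀ x : Fin 3 → ℝ, x 2 = 0 → pd i f x = 0 := by
  intro x hx
  simp only [pd]
  rw [← (hf x).lineDeriv_eq_fderiv, lineDeriv]
  have : (fun t : ℝ => f (x + t • Pi.single i 1)) = fun _ => 0 := by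
    funext t
    apply h
    simp [hx, hi.symm]
  rw [this]
  simp

lemma pd_iterate_tangential_eq_zero {i : Fin 3} (hi : i ≠ 2) (m : ℕ) {f : (Fin 3 → ℝ) → ℝ}
    (hf : ContDiff ℝ m f) (h : ∀ x : Fin 3 → ℝ, x 2 = 0 → f x = 0) :
    ∀ x : Fin 3 → ℝ, x 2 = 0 → (pd i)^[m] f x = 0 := by
  induction m generalizing f with
  | zero => exact h
  | succ m ih =>
    exact ih (contDiff_pd i hf)
      (pd_tangential_eq_zero (hf.differentiable (by norm_cast)) h hi)

lemma pdMulti_eq_zero_of_normal {n : ℕ} {f : (Fin 3 → ℝ) → ℝ} (hf : ContDiff ℝ n f)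
    (α : Fin 3 → ℕ) (hα : α 0 + α 1 + α 2 ≤ n)
    (h : ∀ x : Fin 3 → ℝ, x 2 = 0 → (pd 2)^[α 2] f x = 0) :
    ∀ x : Fin 3 → ℝ, x 2 = 0 → pdMulti α f x = 0 := by
  have h0 : ContDiff ℝ ((α 0 + α 1 + α 2 : ℕ)) f := hf.of_le (by norm_cast)
  have h1 : ContDiff ℝ ((α 0 + α 1 : ℕ)) ((pd 2)^[α 2] f) := contDiff_pd_iterate 2 _ h0
  exact pd_iterate_tangential_eq_zero (by decide) _ (contDiff_pd_iterate 1 _ h1)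
    (pd_iterate_tangential_eq_zero (by decide) _ (h1.of_le (by norm_cast; omega)) h)

lemma tendsto_boundary {g : (Fin 3 → ℝ) → ℝ} (hg : Continuous g) (x₁ x₂ : ℝ) :
    Tendsto (fun s : ℝ => g ![x₁, x₂, s]) (nhds 0) (nhds (g ![x₁, x₂, 0])) := by
  have : Continuous fun s : ℝ => g ![x₁, x₂, s] := by
    apply hg.comp
    refine continuous_pi fun i => ?_
    fin_cases i
    · exact continuous_const
    · exact continuous_const
    · exact continuous_id
  exact this.tendsto 0

lemma isOpen_upper : IsOpen {x : Fin 3 → ℝ | 0 < x 2} :=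
  isOpen_lt continuous_const (continuous_apply 2)

lemma isOpen_lower : IsOpen {x : Fin 3 → ℝ | x 2 < 0} :=
  isOpen_lt (continuous_apply 2) continuous_const

lemma eq_of_boundary {x : Fin 3 → ℝ} (hx : x 2 = 0) : x = ![x 0, x 1, 0] := by
  ext i; fin_cases i <;> simp [hx]

/-- Normal derivatives of a function vanishing on the open upper half-space vanish there, hence
also on `Γ` by continuity. -/
lemma pd_iterate_eq_zero_of_upper (m : ℕ) {f : (Fin 3 → ℝ) → ℝ} (hf : ContDiff ℝ m f)
    (h : ∀ x : Fin 3 → ℝ, 0 < x 2 → f x = 0) :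
    ∀ x : Fin 3 → ℝ, x 2 = 0 → (pd 2)^[m] f x = 0 := by
  have hz : (pd 2)^[m] (fun _ : Fin 3 → ℝ => (0 : ℝ)) = fun _ => 0 := by
    apply Function.iterate_fixed
    funext x
    simp [pd]
  have h1 : EqOn ((pd 2)^[m] f) (fun _ => 0) {x : Fin 3 → ℝ | 0 < x 2} := by
    rw [← hz]
    exact pd_iterate_eqOn isOpen_upper (fun x hx => h x hx) 2 m
  intro x hx
  have hc : Continuous ((pd 2)^[m] f) :=
    (contDiff_pd_iterate (k := 0) 2 m (by simpa using hf)).continuous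
  have ht := (tendsto_boundary hc (x 0) (x 1)).mono_left
    (nhdsWithin_le_nhds (s := Ioi (0 : ℝ)))
  rw [eq_of_boundary hx]
  refine tendsto_nhds_unique ht (tendsto_const_nhds.congr' ?_)
  filter_upwards [self_mem_nhdsWithin] with s hs
  exact (h1 (show 0 < (![x 0, x 1, s] : Fin 3 → ℝ) 2 from hs)).symm

/-- Odd normal derivatives of the tangential components vanish on `Γ`. -/
lemma normal_odd_eq_zero {n : ℕ} (hn : 1 ≤ n)
    {a : (Fin 3 → ℝ) → (Fin 3 → ℝ)} (ha : ∀ j, ContDiff ℝ n (fun y => a y j))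
    (hbc1 : ∀ x : Fin 3 → ℝ, x 2 = 0 → a x 2 = 0)
    (hbc2 : ∀ x₁ x₂ : ℝ, ∀ j : Fin 2,
      pd 2 (fun y => a y j.castSucc) ![x₁, x₂, 0]
        = pd j.castSucc (fun y => a y 2) ![x₁, x₂, 0])
    (hcomp : ∀ k : ℕ, Odd k → 3 ≤ k → k ≤ n → ∀ x₁ x₂ : ℝ, ∀ j : Fin 2,
      pd3pow k (fun y => a y j.castSucc) ![x₁, x₂, 0] = 0)
    {m : ℕ} (hm : Odd m) (hmn : m ≤ n) (j : Fin 2) :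
    ∀ x : Fin 3 → ℝ, x 2 = 0 → (pd 2)^[m] (fun y => a y j.castSucc) x = 0 := by
  intro x hx
  rcases Nat.lt_or_ge m 3 with h3 | h3
  · obtain rfl : m = 1 := by obtain ⟨r, rfl⟩ := hm; omega
    have hj : j.castSucc ≠ (2 : Fin 3) := by fin_cases j <;> decide
    have hd : Differentiable ℝ (fun y => a y 2) :=
      (ha 2).differentiable (by norm_cast; omega)
    have := pd_tangential_eq_zero hd hbc1 hj x hx
    rw [eq_of_boundary hx, ← hbc2] at this
    rw [eq_of_boundary hx]
    exact this
  · rw [eq_of_boundary hx]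
    exact hcomp m hm h3 hmn _ _ j

/-- Even normal derivatives of the normal component vanish on `Γ`. -/
lemma normal_even_eq_zero {n : ℕ} {a : (Fin 3 → ℝ) → (Fin 3 → ℝ)}
    (ha : ∀ j, ContDiff ℝ n (fun y => a y j))
    (hdiv : ∀ x : Fin 3 → ℝ, 0 ≤ x 2 → div3 a x = 0)
    (hbc1 : ∀ x : Fin 3 → ℝ, x 2 = 0 → a x 2 = 0)
    (hodd : ∀ m : ℕ, Odd m → m ≤ n → ∀ j : Fin 2, ∀ x : Fin 3 → ℝ, x 2 = 0 →
      (pd 2)^[m] (fun y => a y j.castSucc) x = 0)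
    {m : ℕ} (hm : Even m) (hmn : m ≤ n) :
    ∀ x : Fin 3 → ℝ, x 2 = 0 → (pd 2)^[m] (fun y => a y 2) x = 0 := by
  rcases m with _ | p
  · exact hbc1
  intro x hx
  have hp : Odd p := by rw [← Nat.not_even_iff_odd]; rwa [Nat.even_add_one] at hm
  have hc : ∀ j, ContDiff ℝ ((p + 1 : ℕ)) (fun y => a y j) := fun j =>
    (ha j).of_le (by norm_cast)
  have hpd : ∀ i j, ContDiff ℝ p (pd i (fun y => a y j)) := fun i j => contDiff_pd i (hc j)
  have hcd : ContDiff ℝ p (div3 a) := ((hpd 0 0).add (hpd 1 1)).add (hpd 2 2)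
  have h := pd_iterate_eq_zero_of_upper p hcd (fun y hy => hdiv y hy.le) x hx
  unfold div3 at h
  rw [pd_iterate_add 2 p ((hpd 0 0).add (hpd 1 1)) (hpd 2 2),
    pd_iterate_add 2 p (hpd 0 0) (hpd 1 1), pd_iterate_comm 2 0 p (hc 0),
    pd_iterate_comm 2 1 p (hc 1)] at h
  have hdf : ∀ j, Differentiable ℝ ((pd 2)^[p] (fun y => a y j)) := fun j =>
    (contDiff_pd_iterate (k := 1) 2 p (by simpa [add_comm] using hc j)).differentiable
      (by norm_num)
  have e0 := pd_tangential_eq_zero (i := 0) (hdf 0) (hodd p hp (by omega) 0) (by decide) x hx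
  have e1 := pd_tangential_eq_zero (i := 1) (hdf 1) (hodd p hp (by omega) 1) (by decide) x hx
  rw [Function.iterate_succ_apply]
  linarith

/-! ### The mirror extension -/

/-- sufficiency in Theorem 5.2: if `ã` is `Cⁿ` up to the boundary,
divergence free, satisfies the slip conditions `ã₃ = 0`, `∂₃ã_j = ∂_jã₃` on `Γ`,
and the compatibility conditions `∂₃^k ã₁ = ∂₃^k ã₂ = 0` on `Γ` for every odd
`3 ≤ k ≤ n`, then the mirror extension `a = 𝒯̃ã` satisfies `𝒯a = a`, restricts to
`ã` on `ℝ³₊`, and every derivative `∂^α a_j` with `|α| ≤ n` fits on `Γ` (its traces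
from above and from below exist and coincide). -/
theorem mirror_extension_fits (n : ℕ) (hn : 1 ≤ n)
    (a : (Fin 3 → ℝ) → (Fin 3 → ℝ)) (ha : ContDiff ℝ n a)
    (hdiv : ∀ x : Fin 3 → ℝ, 0 ≤ x 2 → div3 a x = 0)
    (hbc1 : ∀ x₁ x₂ : ℝ, a ![x₁, x₂, 0] 2 = 0)
    (hbc2 : ∀ x₁ x₂ : ℝ, ∀ j : Fin 2,
      pd 2 (fun y => a y j.castSucc) ![x₁, x₂, 0]
        = pd j.castSucc (fun y => a y 2) ![x₁, x₂, 0])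
    (hcomp : ∀ k : ℕ, Odd k → 3 ≤ k → k ≤ n → ∀ x₁ x₂ : ℝ, ∀ j : Fin 2,
      pd3pow k (fun y => a y j.castSucc) ![x₁, x₂, 0] = 0) :
    Tvec (mirrorExt a) = mirrorExt a ∧
    (∀ x : Fin 3 → ℝ, 0 < x 2 → mirrorExt a x = a x) ∧
    (∀ α : Fin 3 → ℕ, α 0 + α 1 + α 2 ≤ n → ∀ j : Fin 3, ∀ x₁ x₂ : ℝ, ∃ L : ℝ,
      Filter.Tendsto
        (fun s : ℝ => pdMulti α (fun y => mirrorExt a y j) ![x₁, x₂, s])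
        (nhdsWithin 0 (Set.Ioi 0)) (nhds L) ∧
      Filter.Tendsto
        (fun s : ℝ => pdMulti α (fun y => mirrorExt a y j) ![x₁, x₂, s])
        (nhdsWithin 0 (Set.Iio 0)) (nhds L)) := by
  have hbc : ∀ x : Fin 3 → ℝ, x 2 = 0 → a x 2 = 0 := fun x hx => by
    rw [eq_of_boundary hx]; exact hbc1 _ _
  have hac : ∀ j, ContDiff ℝ n (fun y => a y j) := fun j => contDiff_pi.1 ha j
  refine ⟨?_, fun x hx => if_pos hx.le, ?_⟩
  · funext x
    ext j
    rw [Tvec_apply]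
    rcases lt_trichotomy (x 2) 0 with hx | hx | hx
    · have h1 : 0 ≤ refl3 x 2 := by simpa [refl3] using hx.le
      rw [mirrorExt, mirrorExt, if_pos h1, if_neg hx.not_ge, Tvec_apply]
    -- on `Γ` the symmetry of the third component is the condition `a₃ = 0`
    · have h1 : refl3 x = x := by ext i; fin_cases i <;> simp [refl3, hx]
      rw [h1, mirrorExt, if_pos hx.ge]
      fin_cases j
      · simp [reflSign]
      · simp [reflSign]
      · simp [hbc x hx]
    · have h1 : ¬ 0 ≤ refl3 x 2 := by simpa [refl3] using hx
      rw [mirrorExt, mirrorExt, if_neg h1, if_pos hx.le, Tvec_apply, refl3_refl3, ← mul_assoc]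
      fin_cases j <;> simp [reflSign]
  · intro α hα j x₁ x₂
    set f : (Fin 3 → ℝ) → ℝ := fun y => a y j with hf
    have hcont : Continuous (pdMulti α f) := continuous_pdMulti (hac j) α hα
    have hup : EqOn (pdMulti α (fun y => mirrorExt a y j)) (pdMulti α f) {x | 0 < x 2} :=
      pdMulti_eqOn isOpen_upper (fun x (hx : 0 < x 2) => by simp [mirrorExt, hx.le, hf]) α
    have hlow : EqOn (pdMulti α (fun y => mirrorExt a y j))
        (fun x => (reflSign j * (-1) ^ α 2) * pdMulti α f (refl3 x)) {x | x 2 < 0} := by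
      rw [← pdMulti_mul_refl]
      refine pdMulti_eqOn isOpen_lower (fun x (hx : x 2 < 0) => ?_) α
      simp only [mirrorExt, if_neg hx.not_ge, Tvec_apply, hf]
    have hodd : ∀ m : ℕ, Odd m → m ≤ n → ∀ j : Fin 2, ∀ x : Fin 3 → ℝ, x 2 = 0 →
        (pd 2)^[m] (fun y => a y j.castSucc) x = 0 := fun m hm hmn j =>
      normal_odd_eq_zero hn hac hbc hbc2 hcomp hm hmn j
    have hmn : α 2 ≤ n := by omega
    have key : (reflSign j * (-1) ^ α 2) * pdMulti α f ![x₁, x₂, 0] =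
        pdMulti α f ![x₁, x₂, 0] := by
      have hzero : (∀ x : Fin 3 → ℝ, x 2 = 0 → (pd 2)^[α 2] f x = 0) →
          pdMulti α f ![x₁, x₂, 0] = 0 := fun h =>
        pdMulti_eq_zero_of_normal (hac j) α hα h _ rfl
      rcases Nat.even_or_odd (α 2) with he | ho
      · rw [he.neg_one_pow]
        fin_cases j
        · simp [reflSign]
        · simp [reflSign]
        · rw [hzero (normal_even_eq_zero hac hdiv hbc hodd he hmn), mul_zero]
      · rw [ho.neg_one_pow]
        fin_cases j
        · rw [hzero (hodd _ ho hmn 0), mul_zero]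
        · rw [hzero (hodd _ ho hmn 1), mul_zero]
        · simp [reflSign]
    refine ⟨pdMulti α f ![x₁, x₂, 0], ?_, ?_⟩
    · refine ((tendsto_boundary hcont x₁ x₂).mono_left nhdsWithin_le_nhds).congr' ?_
      filter_upwards [self_mem_nhdsWithin] with s hs
      exact (hup (show 0 < (![x₁, x₂, s] : Fin 3 → ℝ) 2 from hs)).symm
    · have hr : Continuous refl3 := reflEquiv.continuous
      have hg : Continuous fun x => (reflSign j * (-1) ^ α 2) * pdMulti α f (refl3 x) :=
        continuous_const.mul (hcont.comp hr)
      have ht := tendsto_boundary hg x₁ x₂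
      have h0 : refl3 ![x₁, x₂, 0] = ![x₁, x₂, 0] := by simp [refl3]
      simp only [h0, key] at ht
      refine (ht.mono_left nhdsWithin_le_nhds).congr' ?_
      filter_upwards [self_mem_nhdsWithin] with s hs
      exact (hlow (show (![x₁, x₂, s] : Fin 3 → ℝ) 2 < 0 from hs)).symm
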